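/- arXiv:2201.01752 — 3 statements merged into one kernel-verified Lean document; each statement's English description precedes it below -/
import Mathlib

section
/- Suppose ω : ℤ → [1,∞) is unbounded, nonincreasing, ω(n) = 1 for all n ≥ 0, sup_{n∈ℤ} ω(n−1)/ω(n) < ∞ (so that S_ω is invertible), and Σ_{n≥1} 1/ω(−n)² < ∞. Set M = {a ∈ L²_ω : a(n) = 0 for all n ≥ 1}. Then M is a closed subspace invariant under S_ω⁻¹, every λ in the closed unit disc is an eigenvalue of the adjoint of the restriction S_ω⁻¹|_M, the pair (Y_ω, U⁻¹) is an isometric (and unitary) asymptote of S_ω⁻¹, and S_ω⁻¹|_M does not have an isometric asymptote. -/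
noncomputable section
set_option linter.unusedSectionVars false
open scoped ENNReal InnerProductSpace
open ContinuousLinearMap

/-- A bounded operator `V` is an isometry. -/
def IsIsometryOp {K : Type} [NormedAddCommGroup K] [InnerProductSpace ℂ K]
    (V : K →L[ℂ] K) : Prop :=
  ∀ x, ‖V x‖ = ‖x‖

/-- A bounded operator `V` is unitary: an isometry onto. -/
def IsUnitaryOp {K : Type} [NormedAddCommGroup K] [InnerProductSpace ℂ K]
    (V : K →L[ℂ] K) : Prop :=
  (∀ x, ‖V x‖ = ‖x‖) ∧ Function.Surjective V

/-- `(X, V)` is an isometric asymptote of `T`: `V` is an isometry, `X` intertwines `T` with `V`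
and has dense range, and the pair has the universal property with respect to every pair `(Y, W)`
with `W` an isometry on a Hilbert space and `Y T = W Y`. -/
def IsIsometricAsymptote {H : Type} [NormedAddCommGroup H] [InnerProductSpace ℂ H]
    [CompleteSpace H] (T : H →L[ℂ] H)
    (K : Type) [NormedAddCommGroup K] [InnerProductSpace ℂ K] [CompleteSpace K]
    (X : H →L[ℂ] K) (V : K →L[ℂ] K) : Prop :=
  IsIsometryOp V ∧ DenseRange X ∧ X.comp T = V.comp X ∧
    ∀ (K' : Type) [NormedAddCommGroup K'] [InnerProductSpace ℂ K'] [CompleteSpace K']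
      (W : K' →L[ℂ] K') (Y : H →L[ℂ] K'), IsIsometryOp W → Y.comp T = W.comp Y →
      ∃! Z : K →L[ℂ] K', Z.comp V = W.comp Z ∧ Y = Z.comp X

/-- `(X, U)` is a unitary asymptote of `T`: `U` is unitary, `X` intertwines `T` with `U`,
the pair is minimal (`⋁_{n ≥ 0} U^{-n} X H = K`), and it has the universal property with
respect to every pair `(Y, W)` with `W` unitary on a Hilbert space and `Y T = W Y`. -/
def IsUnitaryAsymptote {H : Type} [NormedAddCommGroup H] [InnerProductSpace ℂ H]
    [CompleteSpace H] (T : H →L[ℂ] H)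
    (K : Type) [NormedAddCommGroup K] [InnerProductSpace ℂ K] [CompleteSpace K]
    (X : H →L[ℂ] K) (U : K →L[ℂ] K) : Prop :=
  IsUnitaryOp U ∧ X.comp T = U.comp X ∧
    (Submodule.span ℂ (⋃ n : ℕ, ⇑(U ^ n) ⁻¹' Set.range X)).topologicalClosure = ⊤ ∧
    ∀ (K' : Type) [NormedAddCommGroup K'] [InnerProductSpace ℂ K'] [CompleteSpace K']
      (W : K' →L[ℂ] K') (Y : H →L[ℂ] K'), IsUnitaryOp W → Y.comp T = W.comp Y →
      ∃! Z : K →L[ℂ] K', Z.comp U = W.comp Z ∧ Y = Z.comp X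

/-- The subspace `M = {f ∈ L²_ω : f̂(n) = 0 for n ≥ 1}`, described via coefficients. -/
def negCoefSubspace {L : Type} [NormedAddCommGroup L] [InnerProductSpace ℂ L]
    (coef : L →ₗ[ℂ] (ℤ → ℂ)) : Submodule ℂ L where
  carrier := {f | ∀ n : ℤ, 1 ≤ n → coef f n = 0}
  add_mem' := by
    intro a b ha hb n hn
    simp [map_add, ha n hn, hb n hn]
  zero_mem' := by
    intro n hn
    simp
  smul_mem' := by
    intro c a ha n hn
    simp [map_smul, ha n hn]


lemma aux_uncountable : ¬ Countable Circle := by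
  intro h
  have h1 : Countable (Set.Ioc (-Real.pi) Real.pi) := Circle.argEquiv.symm.injective.countable
  have h2 : (Set.Ioc (-Real.pi) Real.pi).Countable := h1
  rw [← Cardinal.le_aleph0_iff_set_countable,
    Cardinal.mk_Ioc_real (by linarith [Real.pi_pos])] at h2
  exact absurd h2 (not_le.mpr Cardinal.aleph0_lt_continuum)

lemma aux_no_asymptote {H : Type} [NormedAddCommGroup H] [InnerProductSpace ℂ H]
    [CompleteSpace H] (T : H →L[ℂ] H) (x0 : H) (φ : Circle → (H →L[ℂ] ℂ))
    (hφ : ∀ μ x, φ μ (T x) = (μ : ℂ) * φ μ x) (h0 : ∀ μ, φ μ x0 = 1)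
    (K : Type) [NormedAddCommGroup K] [InnerProductSpace ℂ K] [CompleteSpace K]
    (X : H →L[ℂ] K) (V : K →L[ℂ] K) (hA : IsIsometricAsymptote T K X V) : False := by
  obtain ⟨hV, -, -, huniv⟩ := hA
  have hZ : ∀ μ : Circle, ∃ Z : K →L[ℂ] ℂ, (∀ k, Z (V k) = (μ : ℂ) * Z k) ∧ Z (X x0) = 1 := by
    intro μ
    obtain ⟨Z, ⟨h1, h2⟩, -⟩ := huniv ℂ ((μ : ℂ) • ContinuousLinearMap.id ℂ ℂ) (φ μ)
      (by intro x; simp [norm_smul, Circle.norm_coe]) (by ext x; simp [hφ])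
    refine ⟨Z, fun k => ?_, ?_⟩
    · have := DFunLike.congr_fun h1 k
      simpa using this
    · have := DFunLike.congr_fun h2 x0
      rw [h0] at this
      simpa using this.symm
  choose Z hZ1 hZ2 using hZ
  set z : Circle → K := fun μ => (InnerProductSpace.toDual ℂ K).symm (Z μ) with hz
  have hin : ∀ μ k, ⟪z μ, k⟫_ℂ = Z μ k := fun μ k => by simp [hz]
  have hVz : ∀ μ, V (z μ) = (μ : ℂ) • z μ := by
    intro μ
    rw [← sub_eq_zero, ← norm_eq_zero, ← sq_eq_zero_iff, @norm_sub_sq ℂ]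
    have e : ⟪V (z μ), (μ : ℂ) • z μ⟫_ℂ = (‖z μ‖ : ℂ) ^ 2 := by
      rw [inner_smul_right, ← inner_conj_symm, hin, hZ1, ← hin, inner_self_eq_norm_sq_to_K]
      simp only [map_mul, map_pow]
      rw [← mul_assoc, Complex.mul_conj, Circle.normSq_coe]
      simp
    rw [e, hV, norm_smul]
    simp only [Circle.norm_coe, one_mul]
    simp [← Complex.ofReal_pow]
    ring
  have horth : ∀ μ ν, μ ≠ ν → ⟪z μ, z ν⟫_ℂ = 0 := by
    intro μ ν hne
    have h1 := hZ1 μ (z ν)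
    rw [hVz, map_smul, smul_eq_mul] at h1
    rw [hin]
    by_contra hcon
    exact hne (Circle.ext (mul_right_cancel₀ hcon h1)).symm
  have hne : ∀ μ, z μ ≠ 0 := by
    intro μ h
    have := hin μ (X x0)
    rw [h, hZ2] at this
    simp at this
  have hon : Orthonormal ℂ (fun μ => ((‖z μ‖⁻¹ : ℝ) : ℂ) • z μ) := by
    constructor
    · intro μ
      have := norm_ne_zero_iff.mpr (hne μ)
      rw [norm_smul]
      simp [this]
    · intro μ ν h
      simp [inner_smul_left, inner_smul_right, horth μ ν h]
  have hs := (hon.inner_products_summable (X x0)).countable_support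
  have : (Function.support fun i => ‖⟪((‖z i‖⁻¹ : ℝ) : ℂ) • z i, X x0⟫_ℂ‖ ^ 2) = Set.univ := by
    ext i
    simp [hin, hZ2, hne]
  rw [this, Set.countable_univ_iff] at hs
  exact aux_uncountable hs

lemma aux_universal {H K K' : Type} [NormedAddCommGroup H] [InnerProductSpace ℂ H]
    [NormedAddCommGroup K] [InnerProductSpace ℂ K] 
    [NormedAddCommGroup K'] [InnerProductSpace ℂ K'] [CompleteSpace K']
    (T : H →L[ℂ] H) (X : H →L[ℂ] K) (V : K →L[ℂ] K) (hd : DenseRange X)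
    (hX : X.comp T = V.comp X) (W : K' →L[ℂ] K') (Y : H →L[ℂ] K')
    (hY : Y.comp T = W.comp Y) (hb : ∃ C, ∀ x, ‖Y x‖ ≤ C * ‖X x‖) :
    ∃! Z : K →L[ℂ] K', Z.comp V = W.comp Z ∧ Y = Z.comp X := by
  have key : ∀ x, (Y.toLinearMap.extendOfNorm X.toLinearMap) (X x) = Y x :=
    fun x => LinearMap.extendOfNorm_eq (f := Y.toLinearMap) (e := X.toLinearMap) hd hb x
  have hXx : ∀ x, X (T x) = V (X x) := fun x => DFunLike.congr_fun hX x
  have hYx : ∀ x, Y (T x) = W (Y x) := fun x => DFunLike.congr_fun hY x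
  refine ⟨Y.toLinearMap.extendOfNorm X.toLinearMap, ⟨?_, ?_⟩, ?_⟩
  · apply ContinuousLinearMap.coeFn_injective
    apply hd.equalizer (ContinuousLinearMap.continuous _) (ContinuousLinearMap.continuous _)
    ext x
    simp [← hXx, key, hYx]
  · ext x; simp [key]
  · rintro Z ⟨-, h⟩
    apply ContinuousLinearMap.coeFn_injective
    apply hd.equalizer (ContinuousLinearMap.continuous _) (ContinuousLinearMap.continuous _)
    ext x
    simp only [Function.comp_apply, key]
    exact (DFunLike.congr_fun h x).symm

lemma aux_lp_norm (a : lp (fun _ : ℤ => ℂ) 2) : ‖a‖ ^ 2 = ∑' n, ‖a n‖ ^ 2 := by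
  have := lp.norm_rpow_eq_tsum (p := 2) (by norm_num) a
  simpa using this

/-- Suppose the weight `ω` is unbounded, nonincreasing, `≡ 1` on `n ≥ 0`, satisfies
`sup_n ω(n-1)/ω(n) < ∞` and `Σ_{n ≥ 1} 1/ω(-n)² < ∞`.  Then `S_ω` is invertible, the subspace
`M = {f : f̂(n) = 0, n ≥ 1}` is closed and invariant for `S_ω⁻¹`, every `λ` in the closed unit
disc is an eigenvalue of `(S_ω⁻¹|_M)*`, the pair `(Y_ω, U⁻¹)` is an isometric (and unitary)
asymptote of `S_ω⁻¹`, and `S_ω⁻¹|_M` has no isometric asymptote. -/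
theorem restriction_of_inverse_weighted_shift_has_no_isometric_asymptote
    (ω : ℤ → ℝ) (hω1 : ∀ n, 1 ≤ ω n)
    (hmono : ∀ m n : ℤ, m ≤ n → ω n ≤ ω m)
    (hunbdd : ∀ C : ℝ, ∃ n : ℤ, C < ω n)
    (hone : ∀ n : ℤ, 0 ≤ n → ω n = 1)
    (hratio : ∃ C : ℝ, ∀ n : ℤ, ω (n - 1) / ω n ≤ C)
    (hsum : Summable fun n : ℕ => 1 / ω (-(n + 1 : ℕ) : ℤ) ^ 2)
    -- `L` is (a model of) the weighted space `L²_ω`, described by its Fourier coefficients: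
    (L : Type) [NormedAddCommGroup L] [InnerProductSpace ℂ L] [CompleteSpace L]
    (coef : L →ₗ[ℂ] (ℤ → ℂ)) (hcoefinj : Function.Injective coef)
    (hnorm : ∀ f : L, ‖f‖ ^ 2 = ∑' n : ℤ, ‖coef f n‖ ^ 2 * ω n ^ 2)
    (hcoefsurj : ∀ a : ℤ → ℂ, Summable (fun n : ℤ => ‖a n‖ ^ 2 * ω n ^ 2) → ∃ f : L, coef f = a)
    -- the bilateral weighted shift `S_ω` on `L²_ω`:
    (Sw : L →L[ℂ] L) (hSw : ∀ (f : L) (n : ℤ), coef (Sw f) n = coef f (n - 1))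
    -- the natural inclusion `Y_ω : L²_ω → ℓ²(ℤ)`:
    (Y : L →L[ℂ] lp (fun _ : ℤ => ℂ) 2) (hY : ∀ (f : L) (n : ℤ), Y f n = coef f n)
    -- the bilateral shift `U` on `ℓ²(ℤ)` and its inverse:
    (U Uinv : lp (fun _ : ℤ => ℂ) 2 →L[ℂ] lp (fun _ : ℤ => ℂ) 2)
    (hU : ∀ (a : lp (fun _ : ℤ => ℂ) 2) (n : ℤ), U a n = a (n - 1))
    (hUinv : U.comp Uinv = ContinuousLinearMap.id ℂ _ ∧
      Uinv.comp U = ContinuousLinearMap.id ℂ _) :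
    ∃ Sinv : L →L[ℂ] L,
      Sw.comp Sinv = ContinuousLinearMap.id ℂ L ∧ Sinv.comp Sw = ContinuousLinearMap.id ℂ L ∧
      IsClosed ((negCoefSubspace coef : Submodule ℂ L) : Set L) ∧
      ∃ hMinv : ∀ f ∈ negCoefSubspace coef, Sinv f ∈ negCoefSubspace coef,
        (∀ lam : ℂ, ‖lam‖ ≤ 1 → ∃ f ∈ negCoefSubspace coef, f ≠ 0 ∧
          ∀ g ∈ negCoefSubspace coef, ⟪f, Sinv g⟫_ℂ = (starRingEnd ℂ) lam * ⟪f, g⟫_ℂ) ∧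
        IsIsometricAsymptote Sinv (lp (fun _ : ℤ => ℂ) 2) Y Uinv ∧
        IsUnitaryAsymptote Sinv (lp (fun _ : ℤ => ℂ) 2) Y Uinv ∧
        ∀ hMclosed : IsClosed ((negCoefSubspace coef : Submodule ℂ L) : Set L),
          haveI : CompleteSpace ↥(negCoefSubspace coef) := hMclosed.completeSpace_coe
          ¬ ∃ (K' : Type) (_ : NormedAddCommGroup K') (_ : InnerProductSpace ℂ K')
            (_ : CompleteSpace K') (X' : ↥(negCoefSubspace coef) →L[ℂ] K')
            (V : K' →L[ℂ] K'),
            IsIsometricAsymptote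
              ((Sinv.comp (negCoefSubspace coef).subtypeL).codRestrict
                (negCoefSubspace coef) (fun x => hMinv x x.2))
              K' X' V := by
  
  have hpos : ∀ n, 0 < ω n := fun n => lt_of_lt_of_le one_pos (hω1 n)
  -- summability of coefficients
  have hsumm : ∀ f : L, Summable fun n : ℤ => ‖coef f n‖ ^ 2 * ω n ^ 2 := by
    intro f
    by_contra hns
    have h := hnorm f
    rw [tsum_eq_zero_of_not_summable hns] at h
    have hf : f = 0 := by simpa using h
    apply hns
    simp [hf]
  have hext : ∀ f g : L, (∀ n, coef f n = coef g n) → f = g :=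
    fun f g h => hcoefinj (funext h)
  -- bijectivity of the shift
  have hSinj : Function.Injective Sw := by
    intro f g h
    apply hext
    intro n
    have h1 := hSw f (n + 1)
    have h2 := hSw g (n + 1)
    rw [h] at h1
    simp only [add_sub_cancel_right] at h1 h2
    rw [← h1, ← h2]
  have hSsurj : Function.Surjective Sw := by
    intro g
    obtain ⟨C, hC⟩ := hratio
    have hs : Summable fun n : ℤ => ‖coef g (n + 1)‖ ^ 2 * ω n ^ 2 := by
      have h1 : Summable fun n : ℤ => C ^ 2 * (‖coef g (n + 1)‖ ^ 2 * ω (n + 1) ^ 2) :=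
        (((Equiv.addRight (1 : ℤ)).summable_iff).mpr (hsumm g)).mul_left (C ^ 2)
      refine Summable.of_nonneg_of_le (fun n => by positivity) (fun n => ?_) h1
      have h2 := hC (n + 1)
      rw [add_sub_cancel_right, div_le_iff₀ (hpos _)] at h2
      have h3 : ω n ^ 2 ≤ (C * ω (n + 1)) ^ 2 := pow_le_pow_left₀ (hpos n).le h2 2
      calc ‖coef g (n + 1)‖ ^ 2 * ω n ^ 2 ≤ ‖coef g (n + 1)‖ ^ 2 * (C * ω (n + 1)) ^ 2 := by gcongr
        _ = _ := by ring
    obtain ⟨f, hf⟩ := hcoefsurj (fun n => coef g (n + 1)) hs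
    refine ⟨f, hext _ _ fun n => ?_⟩
    rw [hSw, hf]
    simp
  let E : L ≃L[ℂ] L := ContinuousLinearEquiv.ofBijective Sw
    (LinearMap.ker_eq_bot.mpr hSinj) (LinearMap.range_eq_top.mpr hSsurj)
  have hE : ∀ x, E x = Sw x := fun x => rfl
  let Sinv : L →L[ℂ] L := E.symm
  have hSS : ∀ x, Sw (Sinv x) = x := fun x => E.apply_symm_apply x
  have hSS' : ∀ x, Sinv (Sw x) = x := fun x => E.symm_apply_apply x
  have hcS : ∀ f n, coef (Sinv f) n = coef f (n + 1) := by
    intro f n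
    have := hSw (Sinv f) (n + 1)
    rw [hSS] at this
    simpa using this.symm
  -- coordinate functionals
  let c : ℤ → L →L[ℂ] ℂ := fun n =>
    (lp.evalCLM ℂ (fun _ : ℤ => ℂ) 2 n).comp Y
  have hc : ∀ n f, c n f = coef f n := fun n f => hY f n
  have hcl : IsClosed ((negCoefSubspace coef : Submodule ℂ L) : Set L) := by
    have : ((negCoefSubspace coef : Submodule ℂ L) : Set L)
        = ⋂ n : ℤ, ⋂ _ : 1 ≤ n, {f | c n f = 0} := by
      ext f
      simp only [Set.mem_iInter, Set.mem_ofPred_eq, hc]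
      rfl
    rw [this]
    exact isClosed_iInter fun n => isClosed_iInter fun _ =>
      isClosed_eq (c n).continuous continuous_const
  have hMinv : ∀ f ∈ negCoefSubspace coef, Sinv f ∈ negCoefSubspace coef := by
    intro f hf n hn
    rw [hcS]
    exact hf (n + 1) (by omega)
  -- the power series functionals
  have hsumm1 : ∀ f : L, Summable fun n : ℕ => ‖coef f (-(n : ℤ))‖ := by
    intro f
    have hi : Function.Injective (fun n : ℕ => -(n : ℤ)) := by
      intro a b h
      simpa using h
    have h1 := (hsumm f).comp_injective hi
    have h2 : Summable fun n : ℕ => 1 / ω (-(n : ℤ)) ^ 2 := by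
      rw [← summable_nat_add_iff 1]
      exact_mod_cast hsum
    refine Summable.of_nonneg_of_le (fun n => norm_nonneg _) (fun n => ?_) (h1.add h2)
    simp only [Function.comp_apply]
    have hw := hpos (-(n : ℤ))
    set w := ω (-(n : ℤ))
    set x := ‖coef f (-(n : ℤ))‖
    have hx : x = (x * w) * (1 / w) := by field_simp
    have hq : x ^ 2 * w ^ 2 + 1 / w ^ 2 = (x * w) ^ 2 + (1 / w) ^ 2 := by
      rw [one_div_pow]; ring
    rw [hq]
    have hx0 : 0 ≤ x * w := by positivity
    have hw0 : 0 ≤ 1 / w := by positivity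
    calc x = (x * w) * (1 / w) := hx
      _ ≤ _ := by nlinarith [sq_nonneg (x * w - 1 / w)]
  have hphi : ∀ μ : ℂ, ‖μ‖ ≤ 1 → ∃ φ : L →L[ℂ] ℂ,
      (∀ f ∈ negCoefSubspace coef, φ (Sinv f) = μ * φ f) ∧
      (∀ f, coef f = Pi.single 0 1 → φ f = 1) := by
    intro μ hμ
    have hsm : ∀ f : L, Summable fun n : ℕ => μ ^ n * coef f (-(n : ℤ)) := by
      intro f
      refine Summable.of_norm_bounded (hsumm1 f) (fun n => ?_)
      rw [norm_mul, norm_pow]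
      exact mul_le_of_le_one_left (norm_nonneg _) (pow_le_one₀ (norm_nonneg _) hμ)
    have ht : Filter.Tendsto (fun (N : ℕ) (f : L) =>
        (∑ n ∈ Finset.range N, μ ^ n • c (-(n : ℤ)) : L →L[ℂ] ℂ) f) Filter.atTop
        (nhds fun f : L => ∑' n : ℕ, μ ^ n * coef f (-(n : ℤ))) := by
      rw [tendsto_pi_nhds]
      intro f
      have := (hsm f).hasSum.tendsto_sum_nat
      refine this.congr fun N => ?_
      simp [ContinuousLinearMap.sum_apply, hc]
    refine ⟨continuousLinearMapOfTendsto _ ht, fun f hf => ?_, fun f hf => ?_⟩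
    · change (∑' n : ℕ, μ ^ n * coef (Sinv f) (-(n : ℤ)))
        = μ * ∑' n : ℕ, μ ^ n * coef f (-(n : ℤ))
      rw [(hsm (Sinv f)).tsum_eq_zero_add, ← tsum_mul_left]
      have h1 : coef f 1 = 0 := hf 1 le_rfl
      simp only [hcS]
      simp only [pow_zero, one_mul, Nat.cast_zero, neg_zero, zero_add, h1]
      refine tsum_congr fun n => ?_
      have : -((n + 1 : ℕ) : ℤ) + 1 = -(n : ℤ) := by push_cast; ring
      rw [this]
      ring
    · change (∑' n : ℕ, μ ^ n * coef f (-(n : ℤ))) = 1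
      rw [tsum_eq_single 0]
      · simp [hf]
      · intro n hn
        have : (-(n : ℤ)) ≠ 0 := by simpa using hn
        rw [hf, Pi.single_eq_of_ne this, mul_zero]
  -- finitely supported vectors
  have hsing : ∀ (k : ℤ) (v : ℂ), ∃ f : L, coef f = Pi.single k v := by
    intro k v
    apply hcoefsurj
    apply summable_of_ne_finset_zero (s := {k})
    intro n hn
    have : n ≠ k := by simpa using hn
    rw [Pi.single_eq_of_ne this]
    simp
  obtain ⟨e0, he0⟩ := hsing 0 1
  have he0M : e0 ∈ negCoefSubspace coef := by
    intro n hn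
    rw [he0]
    exact Pi.single_eq_of_ne (by omega) _
  -- the unitary shift
  have hUn : ∀ a, ‖U a‖ = ‖a‖ := by
    intro a
    rw [← sq_eq_sq₀ (norm_nonneg _) (norm_nonneg _), aux_lp_norm, aux_lp_norm]
    simp only [hU]
    exact (Equiv.subRight (1 : ℤ)).tsum_eq (fun n => ‖a n‖ ^ 2)
  have hUU : ∀ a, U (Uinv a) = a := fun a => DFunLike.congr_fun hUinv.1 a
  have hUU' : ∀ a, Uinv (U a) = a := fun a => DFunLike.congr_fun hUinv.2 a
  have hUi : ∀ a, ‖Uinv a‖ = ‖a‖ := fun a => by rw [← hUn, hUU]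
  have hinter : Y.comp Sinv = Uinv.comp Y := by
    ext1 f
    have h1 : U (Y (Sinv f)) = Y f := by
      ext n
      rw [hU, hY, hY, hcS]
      simp
    change Y (Sinv f) = Uinv (Y f)
    rw [← h1, hUU']
  have hdense : DenseRange Y := by
    intro a
    have h := lp.hasSum_single (p := 2) (by norm_num) a
    refine mem_closure_of_tendsto h (Filter.Eventually.of_forall fun s => ?_)
    have hr : ∀ k : ℤ, lp.single 2 k (a k) ∈ LinearMap.range Y.toLinearMap := by
      intro k
      obtain ⟨f, hf⟩ := hsing k (a k)
      refine ⟨f, ?_⟩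
      ext n
      change Y f n = _
      rw [hY, hf]
      rw [lp.coeFn_single]
    exact Submodule.sum_mem _ fun k _ => hr k
  have hbound : ∀ (K' : Type) [NormedAddCommGroup K'] [InnerProductSpace ℂ K']
      (W : K' →L[ℂ] K') (Y' : L →L[ℂ] K'), (∀ x, ‖W x‖ = ‖x‖) → Y'.comp Sinv = W.comp Y' →
      ∃ C, ∀ x, ‖Y' x‖ ≤ C * ‖Y x‖ := by
    intro K' _ _ W Y' hW hY'
    have hstep : ∀ f, ‖Y' (Sw f)‖ = ‖Y' f‖ := by
      intro f
      have := DFunLike.congr_fun hY' (Sw f)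
      simp only [ContinuousLinearMap.comp_apply, hSS'] at this
      rw [this, hW]
    have hpow : ∀ (k : ℕ) f, ‖Y' ((Sw ^ k) f)‖ = ‖Y' f‖ := by
      intro k
      induction k with
      | zero => intro f; simp
      | succ k ih =>
        intro f
        rw [pow_succ', ContinuousLinearMap.mul_apply, hstep, ih]
    have hcp : ∀ (k : ℕ) f n, coef ((Sw ^ k) f) n = coef f (n - k) := by
      intro k
      induction k with
      | zero => intro f n; simp
      | succ k ih =>
        intro f n
        rw [pow_succ', ContinuousLinearMap.mul_apply, hSw, ih]
        congr 1
        push_cast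
        ring
    refine ⟨‖Y'‖, fun f => ?_⟩
    have hnk : ∀ k : ℕ, ‖(Sw ^ k) f‖ ^ 2 = ∑' n : ℤ, ‖coef f n‖ ^ 2 * ω (n + k) ^ 2 := by
      intro k
      rw [hnorm, ← (Equiv.addRight (k : ℤ)).tsum_eq]
      simp only [hcp, Equiv.coe_addRight, add_sub_cancel_right]
    have hlim : Filter.Tendsto (fun k : ℕ => ∑' n : ℤ, ‖coef f n‖ ^ 2 * ω (n + k) ^ 2)
        Filter.atTop (nhds (∑' n : ℤ, ‖coef f n‖ ^ 2)) := by
      refine tendsto_tsum_of_dominated_convergence (hsumm f) (fun n => ?_)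
        (Filter.Eventually.of_forall fun k n => ?_)
      · refine tendsto_const_nhds.congr' ?_
        filter_upwards [Filter.eventually_ge_atTop n.natAbs] with k hk
        rw [hone (n + k) (by omega)]
        simp
      · rw [Real.norm_of_nonneg (by positivity)]
        have := hmono n (n + k) (by omega)
        have h0 := (hpos (n + k)).le
        gcongr
    have hYn : ‖Y f‖ ^ 2 = ∑' n : ℤ, ‖coef f n‖ ^ 2 := by
      rw [aux_lp_norm]
      simp only [hY]
    rw [← hYn] at hlim
    have hle : ‖Y' f‖ ^ 2 ≤ ‖Y'‖ ^ 2 * ‖Y f‖ ^ 2 := by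
      refine ge_of_tendsto (hlim.const_mul (‖Y'‖ ^ 2)) (Filter.Eventually.of_forall fun k => ?_)
      rw [← hnk, ← hpow k f, ← mul_pow]
      exact pow_le_pow_left₀ (norm_nonneg _) (Y'.le_opNorm _) 2
    rw [← mul_pow] at hle
    exact le_of_sq_le_sq hle (by positivity)
  refine ⟨Sinv, ContinuousLinearMap.ext hSS, ContinuousLinearMap.ext hSS', hcl, hMinv,
    ?_, ?_, ?_, ?_⟩
  · intro lam hlam
    obtain ⟨φ, h1, h2⟩ := hphi (starRingEnd ℂ lam) (by simpa using hlam)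
    haveI : CompleteSpace ↥(negCoefSubspace coef) := hcl.completeSpace_coe
    let f : negCoefSubspace coef := (InnerProductSpace.toDual ℂ _).symm
      (φ.comp (negCoefSubspace coef).subtypeL)
    have hf : ∀ g (hg : g ∈ negCoefSubspace coef), ⟪(f : L), g⟫_ℂ = φ g := by
      intro g hg
      have : ⟪f, (⟨g, hg⟩ : negCoefSubspace coef)⟫_ℂ = φ g := by
        simp [f]
      simpa using this
    refine ⟨f, f.2, ?_, ?_⟩
    · intro h
      have h3 := hf e0 he0M
      rw [h, h2 e0 he0] at h3
      simp at h3
    · intro g hg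
      rw [hf _ (hMinv g hg), hf _ hg, h1 g hg]
  · refine ⟨hUi, hdense, hinter, ?_⟩
    intro K' _ _ _ W Y' hW hY'
    exact aux_universal Sinv Y Uinv hdense hinter W Y' hY' (hbound K' W Y' hW hY')
  · refine ⟨⟨hUi, fun a => ⟨U a, hUU' a⟩⟩, hinter, ?_, ?_⟩
    · rw [← Submodule.dense_iff_topologicalClosure_eq_top]
      refine Dense.mono ?_ hdense
      refine subset_trans ?_ Submodule.subset_span
      intro a ha
      exact Set.mem_iUnion.mpr ⟨0, by simpa using ha⟩
    · intro K' _ _ _ W Y' hW hY'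
      exact aux_universal Sinv Y Uinv hdense hinter W Y' hY' (hbound K' W Y' hW.1 hY')
  · intro hMclosed
    haveI : CompleteSpace ↥(negCoefSubspace coef) := hMclosed.completeSpace_coe
    rintro ⟨K', _, _, _, X', V, hA⟩
    choose φ h1 h2 using fun μ : Circle => hphi (μ : ℂ) (Circle.norm_coe μ).le
    exact aux_no_asymptote _ ⟨e0, he0M⟩ (fun μ => (φ μ).comp (negCoefSubspace coef).subtypeL)
      (fun μ x => h1 μ x x.2) (fun μ => h2 μ e0 he0) K' X' V hA
end
end

section
/- Assume the Setup (Section 2) with conditions (sing), (main0), (main1). Let K be a Hilbert space, U an isometry on K, and X : H → K a bounded operator with X T = U X. For n ≥ 0 set K_n = clos(X H_n) and U_n = U|_{K_n}. Then: (i) for every n, U_n is unitary and there is a closed U_{0n}-invariant subspace K_{1n} of K_{0n} such that U_n is unitarily equivalent to U_{0n}|_{K_{1n}}; (ii) the subspaces K_n, n ≥ 0, are pairwise orthogonal; (iii) clos(X H) is the orthogonal direct sum ⊕_{n≥0} K_n; (iv) ‖X|_{H_n} Q_n‖ ≤ ‖X‖ for all n ≥ 0. -/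
noncomputable section
set_option linter.unusedSectionVars false
open scoped ENNReal InnerProductSpace
open ContinuousLinearMap

/-- Isometry between closures of ranges of two operators with equal norms. -/
theorem exists_isom_closure {E F G : Type} [NormedAddCommGroup E] [InnerProductSpace ℂ E]
    [NormedAddCommGroup F] [InnerProductSpace ℂ F] [CompleteSpace F]
    [NormedAddCommGroup G] [InnerProductSpace ℂ G] [CompleteSpace G]
    (Y : E →L[ℂ] F) (A : E →L[ℂ] G) (h : ∀ x, ‖A x‖ = ‖Y x‖)
    (L : Submodule ℂ F) (hL : L = (LinearMap.range (↑Y : E →ₗ[ℂ] F)).topologicalClosure)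
    (M : Submodule ℂ G) (hM : M = (LinearMap.range (↑A : E →ₗ[ℂ] G)).topologicalClosure) :
    ∃ W : ↥L ≃ₗᵢ[ℂ] ↥M, ∀ (x : E) (hx : Y x ∈ L), (W ⟨Y x, hx⟩ : G) = A x := by
  have hYL : ∀ x, Y x ∈ L := fun x => by
    rw [hL]; exact Submodule.le_topologicalClosure _ ⟨x, rfl⟩
  have hAM : ∀ x, A x ∈ M := fun x => by
    rw [hM]; exact Submodule.le_topologicalClosure _ ⟨x, rfl⟩
  have : CompleteSpace L := by
    rw [hL]; exact (Submodule.isClosed_topologicalClosure _).completeSpace_coe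
  have : CompleteSpace M := by
    rw [hM]; exact (Submodule.isClosed_topologicalClosure _).completeSpace_coe
  let e₁ : E →ₗ[ℂ] L := LinearMap.codRestrict L (↑Y : E →ₗ[ℂ] F) hYL
  let e₂ : E →ₗ[ℂ] M := LinearMap.codRestrict M (↑A : E →ₗ[ℂ] G) hAM
  have d₁ : DenseRange e₁ := by
    intro y
    rw [closure_subtype]
    have hy : (y : F) ∈ (LinearMap.range (↑Y : E →ₗ[ℂ] F)).topologicalClosure := hL ▸ y.2
    rw [← SetLike.mem_coe, Submodule.topologicalClosure_coe] at hy
    refine closure_mono ?_ hy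
    rintro _ ⟨x, rfl⟩
    exact ⟨e₁ x, ⟨x, rfl⟩, rfl⟩
  have d₂ : DenseRange e₂ := by
    intro y
    rw [closure_subtype]
    have hy : (y : G) ∈ (LinearMap.range (↑A : E →ₗ[ℂ] G)).topologicalClosure := hM ▸ y.2
    rw [← SetLike.mem_coe, Submodule.topologicalClosure_coe] at hy
    refine closure_mono ?_ hy
    rintro _ ⟨x, rfl⟩
    exact ⟨e₂ x, ⟨x, rfl⟩, rfl⟩
  have hn : ∀ x, ‖e₂ (LinearEquiv.refl ℂ E x)‖ = ‖e₁ x‖ := fun x => h x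
  refine ⟨(LinearEquiv.refl ℂ E).extendOfIsometry e₁ e₂ d₁ d₂ hn, fun x hx => ?_⟩
  have := LinearEquiv.extendOfIsometry_eq (LinearEquiv.refl ℂ E) e₁ e₂ d₁ d₂ hn x
  exact congrArg Subtype.val this

/-- If `A U = V A`, `B U₂ = V B` with `V` isometric and `U₂` unitary then
`(B* A) U = U₂ (B* A)`. -/
theorem adjoint_comp_intertwines {E E₂ F : Type} [NormedAddCommGroup E] [InnerProductSpace ℂ E]
    [CompleteSpace E] [NormedAddCommGroup E₂] [InnerProductSpace ℂ E₂] [CompleteSpace E₂]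
    [NormedAddCommGroup F] [InnerProductSpace ℂ F] [CompleteSpace F]
    (U : E →L[ℂ] E) (U₂ : E₂ →L[ℂ] E₂) (hU₂ : IsUnitaryOp U₂)
    (V : F →L[ℂ] F) (hV : IsIsometryOp V) (A : E →L[ℂ] F) (B : E₂ →L[ℂ] F)
    (hA : ∀ x, A (U x) = V (A x)) (hB : ∀ x, B (U₂ x) = V (B x)) :
    ((adjoint B).comp A).comp U = U₂.comp ((adjoint B).comp A) := by
  have inV : ∀ x y, ⟪V x, V y⟫_ℂ = ⟪x, y⟫_ℂ :=
    (LinearMap.norm_map_iff_inner_map_map V).1 hV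
  have inU : ∀ x y, ⟪U₂ x, U₂ y⟫_ℂ = ⟪x, y⟫_ℂ :=
    (LinearMap.norm_map_iff_inner_map_map U₂).1 hU₂.1
  ext x
  refine ext_inner_left ℂ fun v => ?_
  obtain ⟨w, rfl⟩ := hU₂.2 v
  simp only [ContinuousLinearMap.comp_apply]
  rw [inU, adjoint_inner_right, adjoint_inner_right, hA, hB, inV]

/-- The modulus of an operator intertwining a unitary with an isometry. -/
theorem exists_modulus {E F : Type} [NormedAddCommGroup E] [InnerProductSpace ℂ E]
    [CompleteSpace E] [NormedAddCommGroup F] [InnerProductSpace ℂ F] [CompleteSpace F]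
    (U : E →L[ℂ] E) (Y : E →L[ℂ] F)
    (hc : ((adjoint Y).comp Y).comp U = U.comp ((adjoint Y).comp Y)) :
    ∃ A : E →L[ℂ] E, (∀ x, ‖A x‖ = ‖Y x‖) ∧ ∀ x, A (U x) = U (A x) := by
  let P : E →L[ℂ] E := (adjoint Y).comp Y
  have hP : 0 ≤ P := (ContinuousLinearMap.nonneg_iff_isPositive _).2
    (ContinuousLinearMap.isPositive_adjoint_comp_self Y)
  have hcomm : Commute P U := hc
  have hA : Commute (CFC.sqrt P) U := hcomm.cfcₙ_nnreal _
  have hss : CFC.sqrt P * CFC.sqrt P = P := CFC.sqrt_mul_sqrt_self P hP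
  have hsa : adjoint (CFC.sqrt P) = CFC.sqrt P :=
    (IsSelfAdjoint.of_nonneg (CFC.sqrt_nonneg P)).star_eq
  refine ⟨CFC.sqrt P, fun x => ?_, fun x => congrArg (fun S : E →L[ℂ] E => S x) hA.eq⟩
  have h1 : ⟪CFC.sqrt P x, CFC.sqrt P x⟫_ℂ = ⟪Y x, Y x⟫_ℂ := by
    rw [← adjoint_inner_right, hsa, ← adjoint_inner_right]
    exact congrArg (fun S : E →L[ℂ] E => ⟪x, S x⟫_ℂ) hss
  rw [inner_self_eq_norm_sq_to_K, inner_self_eq_norm_sq_to_K] at h1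
  have h2 : ‖CFC.sqrt P x‖ ^ 2 = ‖Y x‖ ^ 2 := by exact_mod_cast h1
  exact (sq_eq_sq₀ (norm_nonneg _) (norm_nonneg _)).1 h2

/-- Lemma 2.1: basic structure of intertwinings of `T` with an isometry. -/
theorem intertwining_with_isometry_structure
    {H : Type} [NormedAddCommGroup H] [InnerProductSpace ℂ H] [CompleteSpace H]
    [TopologicalSpace.SeparableSpace H]
    (K0 : ℕ → Type) [∀ n, NormedAddCommGroup (K0 n)] [∀ n, InnerProductSpace ℂ (K0 n)]
    [∀ n, CompleteSpace (K0 n)] [∀ n, TopologicalSpace.SeparableSpace (K0 n)]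
    -- the unitaries `U_{0n}`, each reductive, with pairwise singular spectral measures:
    (U0 : ∀ n, K0 n →L[ℂ] K0 n)
    (hU0 : ∀ n, IsUnitaryOp (U0 n))
    (hU0red : ∀ (n) (F : Submodule ℂ (K0 n)), IsClosed (F : Set (K0 n)) →
      (∀ x ∈ F, U0 n x ∈ F) → ∀ x ∈ F, ContinuousLinearMap.adjoint (U0 n) x ∈ F)
    (hsing : ∀ n k, n ≠ k → ∀ Z : K0 n →L[ℂ] K0 k, Z.comp (U0 n) = (U0 k).comp Z → Z = 0)
    (T : H →L[ℂ] H)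
    -- the nonzero closed `T`-invariant subspaces `H_n`:
    (Hn : ℕ → Submodule ℂ H)
    (hHcl : ∀ n, IsClosed ((Hn n : Set H)))
    (hHne : ∀ n, Hn n ≠ ⊥)
    (hTH : ∀ n, ∀ x ∈ Hn n, T x ∈ Hn n)
    -- `Vn n = ⋁_{k ≠ n} H_k`:
    (Vn : ℕ → Submodule ℂ H)
    (hVn : ∀ n, Vn n = (⨆ k ∈ {k : ℕ | k ≠ n}, Hn k).topologicalClosure)
    -- (main0):
    (hmain0 : ∀ n, Hn n ⊓ Vn n = ⊥ ∧ Hn n ⊔ Vn n = ⊤)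
    -- (main1): the invertible intertwiners `X_n : H_n → K_{0n}`:
    (X0 : ∀ n, ↥(Hn n) ≃L[ℂ] K0 n)
    (hX0 : ∀ (n) (x : ↥(Hn n)), X0 n ⟨T ↑x, hTH n ↑x x.2⟩ = U0 n (X0 n x))
    -- the skew projections `Q_n` onto `H_n` along `⋁_{k ≠ n} H_k`:
    (Q : ℕ → H →L[ℂ] H)
    (hQmem : ∀ n x, Q n x ∈ Hn n)
    (hQid : ∀ n, ∀ x ∈ Hn n, Q n x = x)
    (hQker : ∀ n, ∀ x ∈ Vn n, Q n x = 0)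
    -- an isometry `U` on a Hilbert space `K` and an intertwining `X`:
    {K : Type} [NormedAddCommGroup K] [InnerProductSpace ℂ K] [CompleteSpace K]
    (Uiso : K →L[ℂ] K) (hUiso : IsIsometryOp Uiso)
    (X : H →L[ℂ] K) (hX : X.comp T = Uiso.comp X)
    -- `Kn n = clos (X H_n)`:
    (Kn : ℕ → Submodule ℂ K)
    (hKn : ∀ n, Kn n = ((Hn n).map (↑X : H →ₗ[ℂ] K)).topologicalClosure) :
    -- (i)
    (∀ n, (∀ y ∈ Kn n, Uiso y ∈ Kn n) ∧ (∀ y ∈ Kn n, ∃ z ∈ Kn n, Uiso z = y) ∧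
      ∃ K1 : Submodule ℂ (K0 n), IsClosed (K1 : Set (K0 n)) ∧ (∀ z ∈ K1, U0 n z ∈ K1) ∧
        ∃ W : ↥(Kn n) ≃ₗᵢ[ℂ] ↥K1, ∀ (y : ↥(Kn n)) (hy : Uiso ↑y ∈ Kn n),
          (W ⟨Uiso ↑y, hy⟩ : K0 n) = U0 n ↑(W y)) ∧
    -- (ii)
    (∀ n k, n ≠ k → ∀ y ∈ Kn n, ∀ z ∈ Kn k, ⟪y, z⟫_ℂ = 0) ∧
    -- (iii)
    (LinearMap.range (↑X : H →ₗ[ℂ] K)).topologicalClosure = (⨆ n, Kn n).topologicalClosure ∧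
    -- (iv)
    (∀ (n) (x : H), ‖X (Q n x)‖ ≤ ‖X‖ * ‖x‖) := by
  have hXT : ∀ x, X (T x) = Uiso (X x) := fun x => congrArg (fun S : H →L[ℂ] K => S x) hX
  -- transported operators
  let Y : ∀ n, K0 n →L[ℂ] K := fun n =>
    (X.comp (Hn n).subtypeL).comp ((X0 n).symm : K0 n →L[ℂ] Hn n)
  have hYX : ∀ n (x : Hn n), Y n (X0 n x) = X x := fun n x => by simp [Y]
  have hY : ∀ n x, Y n (U0 n x) = Uiso (Y n x) := by
    intro n x
    obtain ⟨w, rfl⟩ := (X0 n).surjective x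
    rw [← hX0, hYX, hYX, hXT]
  have hrange : ∀ n, (Hn n).map (↑X : H →ₗ[ℂ] K) = LinearMap.range (↑(Y n) : K0 n →ₗ[ℂ] K) := by
    intro n
    ext y
    constructor
    · rintro ⟨x, hx, rfl⟩
      exact ⟨X0 n ⟨x, hx⟩, hYX n ⟨x, hx⟩⟩
    · rintro ⟨w, rfl⟩
      obtain ⟨x, rfl⟩ := (X0 n).surjective w
      exact ⟨x, x.2, (hYX n x).symm⟩
  have hKY : ∀ n, Kn n = (LinearMap.range (↑(Y n) : K0 n →ₗ[ℂ] K)).topologicalClosure :=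
    fun n => by rw [hKn, hrange]
  have hKcl : ∀ n, IsClosed (Kn n : Set K) := fun n => by
    rw [hKY]; exact Submodule.isClosed_topologicalClosure _
  have hYK : ∀ n x, Y n x ∈ Kn n := fun n x => by
    rw [hKY]; exact Submodule.le_topologicalClosure _ ⟨x, rfl⟩
  have hXK : ∀ n, ∀ x ∈ Hn n, X x ∈ Kn n := fun n x hx => by
    rw [hKn]; exact Submodule.le_topologicalClosure _ ⟨x, hx, rfl⟩
  -- induction principle for `Kn n`
  have hind : ∀ n (S : Set K), IsClosed S → (∀ x, Y n x ∈ S) → ∀ y ∈ Kn n, y ∈ S := by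
    intro n S hS h y hy
    rw [hKY, ← SetLike.mem_coe, Submodule.topologicalClosure_coe] at hy
    refine closure_minimal ?_ hS hy
    rintro _ ⟨x, rfl⟩
    exact h x
  have hinv : ∀ n, ∀ y ∈ Kn n, Uiso y ∈ Kn n := by
    intro n
    refine hind n (Set.preimage Uiso (Kn n)) ((hKcl n).preimage Uiso.continuous) fun x => ?_
    show Uiso (Y n x) ∈ Kn n
    rw [← hY]; exact hYK n _
  have hiso : Isometry Uiso := AddMonoidHomClass.isometry_of_norm Uiso hUiso
  have horth : ∀ n k, n ≠ k → ∀ y ∈ Kn n, ∀ z ∈ Kn k, ⟪y, z⟫_ℂ = 0 := by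
    intro n k hnk
    have hz : (adjoint (Y k)).comp (Y n) = 0 := hsing n k hnk _
      (adjoint_comp_intertwines (U0 n) (U0 k) (hU0 k) Uiso hUiso (Y n) (Y k) (hY n) (hY k))
    refine hind n {y | ∀ z ∈ Kn k, ⟪y, z⟫_ℂ = 0} ?_ fun x => ?_
    · simp only [Set.ofPred_forall]
      exact isClosed_iInter fun z => isClosed_iInter fun _ =>
        isClosed_eq (by fun_prop) continuous_const
    · refine hind k {z | ⟪Y n x, z⟫_ℂ = 0} (isClosed_eq (by fun_prop) continuous_const)
        fun w => ?_
      show ⟪Y n x, Y k w⟫_ℂ = 0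
      rw [← adjoint_inner_left]
      have : adjoint (Y k) (Y n x) = 0 := congrArg (fun S : K0 n →L[ℂ] K0 k => S x) hz
      rw [this, inner_zero_left]
  refine ⟨fun n => ⟨hinv n, ?_, ?_⟩, horth, ?_, ?_⟩
  · have hcl : IsClosed (Set.image Uiso (Kn n : Set K)) :=
      hiso.isClosedEmbedding.isClosedMap _ (hKcl n)
    refine hind n _ hcl fun x => ?_
    obtain ⟨w, rfl⟩ := (hU0 n).2 x
    exact ⟨Y n w, hYK n w, (hY n w).symm⟩
  · obtain ⟨A, hA, hAU⟩ := exists_modulus (U0 n) (Y n)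
      (adjoint_comp_intertwines (U0 n) (U0 n) (hU0 n) Uiso hUiso (Y n) (Y n) (hY n) (hY n))
    obtain ⟨W, hW⟩ := exists_isom_closure (Y n) A hA (Kn n) (hKY n) _ rfl
    refine ⟨_, Submodule.isClosed_topologicalClosure _, ?_, W, ?_⟩
    · intro z hz
      rw [← SetLike.mem_coe, Submodule.topologicalClosure_coe] at hz ⊢
      refine map_mem_closure (U0 n).continuous hz ?_
      rintro _ ⟨x, rfl⟩
      exact ⟨U0 n x, hAU x⟩
    · intro y hy
      let g : Kn n → Kn n := fun y => ⟨Uiso y, hinv n y y.2⟩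
      have hg : Continuous g := by fun_prop
      have key : ∀ y ∈ Kn n, y ∈ (Set.image Subtype.val {y : Kn n | (W (g y) : K0 n) = U0 n (W y)}) := by
        refine hind n _ ?_ fun x => ?_
        · refine (hKcl n).isClosedEmbedding_subtypeVal.isClosedMap _ ?_
          exact isClosed_eq (by fun_prop) (by fun_prop)
        · refine ⟨⟨Y n x, hYK n x⟩, ?_, rfl⟩
          show (W (g ⟨Y n x, hYK n x⟩) : K0 n) = U0 n (W ⟨Y n x, hYK n x⟩)
          have : g ⟨Y n x, hYK n x⟩ = ⟨Y n (U0 n x), hYK n _⟩ := Subtype.ext (hY n x).symm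
          rw [this, hW, hW, hAU]
      obtain ⟨y₁, h1, h2⟩ := key y y.2
      obtain rfl : y₁ = y := Subtype.ext h2
      exact h1
  · apply le_antisymm
    · refine Submodule.topologicalClosure_minimal _ ?_ (Submodule.isClosed_topologicalClosure _)
      have hle : ∀ k, Hn k ≤ (⨆ n, Kn n).topologicalClosure.comap (↑X : H →ₗ[ℂ] K) := by
        intro k x hx
        exact Submodule.le_topologicalClosure _ (Submodule.mem_iSup_of_mem k (hXK k x hx))
      have htop : (⊤ : Submodule ℂ H) ≤ (⨆ n, Kn n).topologicalClosure.comap (↑X : H →ₗ[ℂ] K) := by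
        rw [← (hmain0 0).2, hVn]
        refine sup_le (hle 0) (Submodule.topologicalClosure_minimal _
          (iSup₂_le fun k _ => hle k) ?_)
        exact (Submodule.isClosed_topologicalClosure _).preimage X.continuous
      rintro _ ⟨x, rfl⟩
      exact htop trivial
    · refine Submodule.topologicalClosure_minimal _ (iSup_le fun n => ?_)
        (Submodule.isClosed_topologicalClosure _)
      rw [hKn]
      refine Submodule.topologicalClosure_mono ?_
      rintro _ ⟨x, _, rfl⟩
      exact ⟨x, rfl⟩
  · intro n x
    have hV : ∀ v ∈ Vn n, ∀ y ∈ Kn n, ⟪y, X v⟫_ℂ = 0 := by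
      intro v hv y hy
      have hle : Vn n ≤ ((Kn n)ᗮ).comap (↑X : H →ₗ[ℂ] K) := by
        rw [hVn]
        refine Submodule.topologicalClosure_minimal _ (iSup₂_le fun k hk w hw => ?_)
          ((Submodule.isClosed_orthogonal _).preimage X.continuous)
        exact fun u hu => horth n k (Ne.symm hk) u hu _ (hXK k w hw)
      exact hle hv y hy
    obtain ⟨a, ha, b, hb, rfl⟩ : ∃ a ∈ Hn n, ∃ b ∈ Vn n, a + b = x :=
      Submodule.mem_sup.1 ((hmain0 n).2 ▸ Submodule.mem_top)
    rw [map_add, hQid n a ha, hQker n b hb, add_zero]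
    refine le_trans ?_ (X.le_opNorm (a + b))
    have h0 := hV b hb (X a) (hXK n a ha)
    have hpy := norm_add_sq_eq_norm_sq_add_norm_sq_of_inner_eq_zero (X a) (X b) h0
    rw [← map_add] at hpy
    nlinarith [norm_nonneg (X a), norm_nonneg (X b), norm_nonneg (X (a + b))]
end
end

section
/- Assume the Setup (Section 2) with conditions (sing), (main0), (main1), (xxnxxn1): sup_{n≥0} ‖X_n‖‖X_n⁻¹‖ < ∞, and (qqn): sup_{n≥0} ‖Q_n‖ < ∞. Then T has a unitary asymptote if and only if there exists c > 0 such that c² Σ_n ‖x_n‖² ≤ ‖Σ_n x_n‖² for every finite family {x_n}_n with x_n ∈ H_n for all n. -/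
noncomputable section
set_option linter.unusedSectionVars false
open scoped ENNReal InnerProductSpace
open ContinuousLinearMap

theorem ua_inner {K : Type} [NormedAddCommGroup K] [InnerProductSpace ℂ K]
    {V : K →L[ℂ] K} (h : IsUnitaryOp V) (x y : K) : ⟪V x, V y⟫_ℂ = ⟪x, y⟫_ℂ :=
  (⟨V.toLinearMap, h.1⟩ : K →ₗᵢ[ℂ] K).inner_map_map x y

theorem ua_orth {K1 K2 K' : Type} [NormedAddCommGroup K1] [InnerProductSpace ℂ K1]
    [CompleteSpace K1] [NormedAddCommGroup K2] [InnerProductSpace ℂ K2] [CompleteSpace K2]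
    [NormedAddCommGroup K'] [InnerProductSpace ℂ K'] [CompleteSpace K']
    {U1 : K1 →L[ℂ] K1} {U2 : K2 →L[ℂ] K2} {W : K' →L[ℂ] K'}
    (h2 : IsUnitaryOp U2) (hW : IsUnitaryOp W)
    (hs : ∀ Z : K1 →L[ℂ] K2, Z.comp U1 = U2.comp Z → Z = 0)
    (A : K1 →L[ℂ] K') (B : K2 →L[ℂ] K') (hA : ∀ x, A (U1 x) = W (A x))
    (hB : ∀ x, B (U2 x) = W (B x)) (a : K1) (b : K2) : ⟪B b, A a⟫_ℂ = 0 := by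
  have := hs ((adjoint B).comp A) (by
    ext a
    refine ext_inner_left ℂ fun v => ?_
    obtain ⟨b, rfl⟩ := h2.2 v
    simp only [ContinuousLinearMap.comp_apply]
    rw [adjoint_inner_right, hA, hB, ua_inner hW, ua_inner h2, adjoint_inner_right])
  rw [← adjoint_inner_right, ← ContinuousLinearMap.comp_apply, this]
  simp

theorem ua_pyth {K' : Type} [NormedAddCommGroup K'] [InnerProductSpace ℂ K']
    (v : ℕ → K') (h : ∀ i j, i ≠ j → ⟪v i, v j⟫_ℂ = 0) (s : Finset ℕ) :
    ‖∑ i ∈ s, v i‖ ^ 2 = ∑ i ∈ s, ‖v i‖ ^ 2 := by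
  classical
  induction s using Finset.induction_on with
  | empty => simp
  | insert a s ha ih =>
    rw [Finset.sum_insert ha, Finset.sum_insert ha, ← ih, sq, sq, sq]
    apply norm_add_sq_eq_norm_sq_add_norm_sq_of_inner_eq_zero (𝕜 := ℂ)
    rw [inner_sum]
    refine Finset.sum_eq_zero fun i hi => h _ _ ?_
    rintro rfl
    exact ha hi

/-- Assembling a square-bounded family of operators into one operator to the direct sum. -/
theorem ua_assemble {H : Type} [NormedAddCommGroup H] [InnerProductSpace ℂ H]
    (G : ℕ → Type) [∀ n, NormedAddCommGroup (G n)] [∀ n, InnerProductSpace ℂ (G n)]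
    (A : ∀ n, H →L[ℂ] G n) (M : ℝ) (hM : 0 ≤ M)
    (hA : ∀ x (s : Finset ℕ), ∑ i ∈ s, ‖A i x‖ ^ 2 ≤ (M * ‖x‖) ^ 2) :
    ∃ X : H →L[ℂ] lp G 2, ∀ x i, (X x : ∀ i, G i) i = A i x := by
  have hmem : ∀ x, Memℓp (fun i => A i x) 2 := fun x =>
    memℓp_gen' (C := (M * ‖x‖) ^ 2) fun s => by simpa using hA x s
  refine ⟨LinearMap.mkContinuous
    { toFun := fun x => (⟨fun i => A i x, hmem x⟩ : lp G 2)
      map_add' := fun x y => by ext i; simp; rfl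
      map_smul' := fun c x => by ext i; simp } M ?_, ?_⟩
  · intro x
    refine lp.norm_le_of_forall_sum_le (by simp) (by positivity) fun s => ?_
    simpa using hA x s
  · intro x i
    rfl

theorem ua_dsum (G : ℕ → Type) [∀ n, NormedAddCommGroup (G n)] [∀ n, InnerProductSpace ℂ (G n)]
    (U : ∀ n, G n →L[ℂ] G n) (hU : ∀ n, IsUnitaryOp (U n)) :
    ∃ V : lp G 2 →L[ℂ] lp G 2, IsUnitaryOp V ∧
      ∀ x i, (V x : ∀ i, G i) i = U i ((x : ∀ i, G i) i) := by
  obtain ⟨V, hV⟩ := ua_assemble (H := lp G 2) G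
    (fun i => (U i).comp (lp.evalCLM ℂ G 2 i)) 1 zero_le_one (by
      intro x s
      have := lp.sum_rpow_le_norm_rpow (p := 2) (by simp) x s
      simp only [ContinuousLinearMap.comp_apply, (hU _).1, one_mul]
      norm_num at this
      exact this)
  have hV' : ∀ x i, (V x : ∀ i, G i) i = U i ((x : ∀ i, G i) i) := fun x i => hV x i
  refine ⟨V, ⟨fun x => ?_, fun y => ?_⟩, hV'⟩
  · rw [lp.norm_eq_tsum_rpow (by simp), lp.norm_eq_tsum_rpow (by simp)]
    simp [hV', (hU _).1]
  · choose x hx using fun i => (hU i).2 ((y : ∀ i, G i) i)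
    have hn : ∀ i, ‖x i‖ = ‖(y : ∀ i, G i) i‖ := fun i => by rw [← hx, (hU i).1]
    have hm : Memℓp x 2 := memℓp_gen (by
      simp only [hn]; exact (lp.memℓp y).summable (by simp))
    refine ⟨⟨x, hm⟩, ?_⟩
    ext i
    rw [hV']
    exact hx i

/-- Operators with pairwise orthogonal ranges and uniform bound define an operator
on the direct sum. -/
theorem ua_synth {K' : Type} [NormedAddCommGroup K'] [InnerProductSpace ℂ K'] [CompleteSpace K']
    (G : ℕ → Type) [∀ n, NormedAddCommGroup (G n)] [∀ n, InnerProductSpace ℂ (G n)]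
    [∀ n, CompleteSpace (G n)]
    (Z : ∀ n, G n →L[ℂ] K') (M : ℝ) (hM : 0 ≤ M) (hZ : ∀ n v, ‖Z n v‖ ≤ M * ‖v‖)
    (ho : ∀ i j, i ≠ j → ∀ a b, ⟪Z i a, Z j b⟫_ℂ = 0) :
    ∃ S : lp G 2 →L[ℂ] K', ∀ i v, S (lp.single 2 i v) = Z i v := by
  obtain ⟨B, hB⟩ := ua_assemble G (fun i => adjoint (Z i)) M hM (by
    intro y s
    set S := ∑ i ∈ s, ‖adjoint (Z i) y‖ ^ 2 with hS
    set v := ∑ i ∈ s, Z i (adjoint (Z i) y) with hv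
    have hS0 : 0 ≤ S := by positivity
    have h1 : ‖v‖ ^ 2 ≤ M ^ 2 * S := by
      rw [hv, ua_pyth (fun i => Z i (adjoint (Z i) y)) (fun i j hij => ho i j hij _ _), hS,
        Finset.mul_sum]
      refine Finset.sum_le_sum fun i _ => ?_
      rw [← mul_pow]
      gcongr
      exact hZ _ _
    have h2 : S ≤ ‖v‖ * ‖y‖ := by
      have : (S : ℂ) = ⟪v, y⟫_ℂ := by
        rw [hv, sum_inner, hS]
        push_cast
        refine Finset.sum_congr rfl fun i _ => ?_
        rw [← adjoint_inner_right, inner_self_eq_norm_sq_to_K]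
        simp
      calc S = ‖(S : ℂ)‖ := by simp [abs_of_nonneg hS0]
        _ ≤ _ := by rw [this]; exact norm_inner_le_norm _ _
    have h3 : S ^ 2 ≤ (M * ‖y‖) ^ 2 * S := by
      calc S ^ 2 ≤ (‖v‖ * ‖y‖) ^ 2 := by gcongr
        _ = ‖v‖ ^ 2 * ‖y‖ ^ 2 := by ring
        _ ≤ (M ^ 2 * S) * ‖y‖ ^ 2 := by gcongr
        _ = _ := by ring
    rcases hS0.eq_or_lt with h | h
    · rw [← h]; positivity
    · exact le_of_mul_le_mul_right (by linarith [sq S]) h)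
  refine ⟨adjoint B, fun i v => ext_inner_right ℂ fun y => ?_⟩
  rw [adjoint_inner_left, lp.inner_single_left, hB, adjoint_inner_right]

theorem ua_ext {H F : Type} [NormedAddCommGroup H] [InnerProductSpace ℂ H]
    [NormedAddCommGroup F] [InnerProductSpace ℂ F] (Hn : ℕ → Submodule ℂ H)
    (hd : (⨆ n, Hn n).topologicalClosure = ⊤) (f g : H →L[ℂ] F)
    (h : ∀ n, ∀ x ∈ Hn n, f x = g x) : f = g := by
  have h1 : (⨆ n, Hn n) ≤ LinearMap.eqLocus f.toLinearMap g.toLinearMap :=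
    iSup_le fun n x hx => h n x hx
  have h2 := Submodule.topologicalClosure_minimal _ h1 (isClosed_eq f.continuous g.continuous)
  ext x
  have : x ∈ (⨆ n, Hn n).topologicalClosure := by rw [hd]; trivial
  exact h2 this

theorem ua_data {H : Type} [NormedAddCommGroup H] [InnerProductSpace ℂ H]
    (K0 : ℕ → Type) [∀ n, NormedAddCommGroup (K0 n)] [∀ n, InnerProductSpace ℂ (K0 n)]
    (U0 : ∀ n, K0 n →L[ℂ] K0 n)
    (T : H →L[ℂ] H)
    (Hn : ℕ → Submodule ℂ H)
    (hHne : ∀ n, Hn n ≠ ⊥)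
    (hTH : ∀ n, ∀ x ∈ Hn n, T x ∈ Hn n)
    (Vn : ℕ → Submodule ℂ H)
    (hVn : ∀ n, Vn n = (⨆ k ∈ {k : ℕ | k ≠ n}, Hn k).topologicalClosure)
    (hmain0 : ∀ n, Hn n ⊓ Vn n = ⊥ ∧ Hn n ⊔ Vn n = ⊤)
    (X0 : ∀ n, ↥(Hn n) ≃L[ℂ] K0 n)
    (hX0 : ∀ (n) (x : ↥(Hn n)), X0 n ⟨T ↑x, hTH n ↑x x.2⟩ = U0 n (X0 n x))
    (Q : ℕ → H →L[ℂ] H)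
    (hQmem : ∀ n x, Q n x ∈ Hn n)
    (hQid : ∀ n, ∀ x ∈ Hn n, Q n x = x)
    (hQker : ∀ n, ∀ x ∈ Vn n, Q n x = 0)
    (hXX : ∃ C : ℝ, ∀ n,
      ‖(X0 n : ↥(Hn n) →L[ℂ] K0 n)‖ * ‖((X0 n).symm : K0 n →L[ℂ] ↥(Hn n))‖ ≤ C)
    (hQbd : ∃ C : ℝ, ∀ n, ‖Q n‖ ≤ C) :
    (⨆ n, Hn n).topologicalClosure = ⊤ ∧
    ∃ (C : ℝ) (J : ∀ n, H →L[ℂ] K0 n) (E : ∀ n, K0 n →L[ℂ] H), 0 < C ∧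
      (∀ n x, ‖J n x‖ ≤ C * ‖x‖) ∧ (∀ n v, ‖E n v‖ ≤ C * ‖v‖) ∧ (∀ n v, E n v ∈ Hn n) ∧
      (∀ n, ∀ x ∈ Hn n, E n (J n x) = x) ∧ (∀ n v, J n (E n v) = v) ∧
      (∀ n k, k ≠ n → ∀ x ∈ Hn k, J n x = 0) ∧ (∀ n x, J n (T x) = U0 n (J n x)) ∧
      (∀ n v, T (E n v) = E n (U0 n v)) ∧ (∀ n, ∀ x ∈ Hn n, ‖J n x‖ ≤ ‖x‖) := by
  obtain ⟨C1, hC1⟩ := hXX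
  obtain ⟨C2, hC2⟩ := hQbd
  have hd : (⨆ n, Hn n).topologicalClosure = ⊤ := by
    rw [eq_top_iff, ← (hmain0 0).2]
    refine sup_le ((le_iSup Hn 0).trans (Submodule.le_topologicalClosure _)) ?_
    rw [hVn]
    exact Submodule.topologicalClosure_mono (iSup₂_le fun k _ => le_iSup Hn k)
  have hHV : ∀ n k, k ≠ n → Hn k ≤ Vn n := fun n k hk => by
    rw [hVn]
    exact (le_iSup₂ (f := fun k (_ : k ∈ {k : ℕ | k ≠ n}) => Hn k) k hk).trans
      (Submodule.le_topologicalClosure _)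
  have ha : ∀ n, 0 < ‖(X0 n : ↥(Hn n) →L[ℂ] K0 n)‖ := fun n => by
    obtain ⟨x, hx, hx0⟩ := (Submodule.ne_bot_iff _).1 (hHne n)
    have h1 : X0 n ⟨x, hx⟩ ≠ 0 := fun h => hx0 (by
      have := (X0 n).map_eq_zero_iff.1 h
      simpa using this)
    have h2 : ‖X0 n ⟨x, hx⟩‖ ≤ ‖(X0 n : ↥(Hn n) →L[ℂ] K0 n)‖ * ‖x‖ :=
      (X0 n : ↥(Hn n) →L[ℂ] K0 n).le_opNorm ⟨x, hx⟩
    exact pos_of_mul_pos_left ((norm_pos_iff.2 h1).trans_le h2) (norm_nonneg x)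
  set a := fun n => ‖(X0 n : ↥(Hn n) →L[ℂ] K0 n)‖ with hadef
  let J : ∀ n, H →L[ℂ] K0 n := fun n =>
    ((a n : ℂ)⁻¹) • (X0 n : ↥(Hn n) →L[ℂ] K0 n).comp ((Q n).codRestrict (Hn n) (hQmem n))
  let E : ∀ n, K0 n →L[ℂ] H := fun n =>
    (a n : ℂ) • (Hn n).subtypeL.comp ((X0 n).symm : K0 n →L[ℂ] ↥(Hn n))
  have hJ : ∀ n x, J n x = (a n : ℂ)⁻¹ • X0 n ⟨Q n x, hQmem n x⟩ := fun n x => rfl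
  have hE : ∀ n v, E n v = (a n : ℂ) • ((X0 n).symm v : H) := fun n x => rfl
  have ha0 : ∀ n, (a n : ℂ) ≠ 0 := fun n => by exact_mod_cast (ha n).ne'
  have hJQ : ∀ n x, ‖J n x‖ ≤ ‖Q n x‖ := fun n x => by
    rw [hJ, norm_smul, norm_inv, Complex.norm_real, Real.norm_of_nonneg (ha n).le, inv_mul_le_iff₀ (ha n)]
    exact (X0 n : ↥(Hn n) →L[ℂ] K0 n).le_opNorm ⟨Q n x, hQmem n x⟩
  have hEm : ∀ n v, E n v ∈ Hn n := fun n v => (Hn n).smul_mem _ ((X0 n).symm v).2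
  have hJH : ∀ n x (hx : x ∈ Hn n), J n x = (a n : ℂ)⁻¹ • X0 n ⟨x, hx⟩ := fun n x hx => by
    rw [hJ]; congr 2; ext; exact hQid n x hx
  have hJ0 : ∀ n k, k ≠ n → ∀ x ∈ Hn k, J n x = 0 := fun n k hk x hx => by
    have h := hJQ n x
    rw [hQker n x (hHV n k hk hx), norm_zero] at h
    exact norm_le_zero_iff.1 h
  have hEJ : ∀ n, ∀ x ∈ Hn n, E n (J n x) = x := fun n x hx => by
    rw [hJH n x hx, map_smul, hE, smul_smul, inv_mul_cancel₀ (ha0 n)]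
    simp
  have hJE : ∀ n v, J n (E n v) = v := fun n v => by
    rw [hE, map_smul, hJH n _ ((X0 n).symm v).2, smul_smul, mul_inv_cancel₀ (ha0 n)]
    simp
  have hJT : ∀ n x, J n (T x) = U0 n (J n x) := by
    intro n x
    have : (J n).comp T = (U0 n).comp (J n) := by
      refine ua_ext Hn hd _ _ fun k x hx => ?_
      simp only [ContinuousLinearMap.comp_apply]
      by_cases hk : k = n
      · subst hk
        rw [hJH k x hx, hJH k _ (hTH k x hx), map_smul, ← hX0]
      · rw [hJ0 n k hk x hx, hJ0 n k hk _ (hTH k x hx), map_zero]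
    exact DFunLike.congr_fun this x
  refine ⟨hd, max 1 (max C1 C2), J, E, lt_of_lt_of_le one_pos (le_max_left _ _), ?_, ?_, hEm, hEJ,
    hJE, hJ0, hJT, ?_, ?_⟩
  · intro n x
    refine (hJQ n x).trans (((Q n).le_opNorm x).trans ?_)
    gcongr
    exact (hC2 n).trans ((le_max_right _ _).trans (le_max_right _ _))
  · intro n v
    rw [hE, norm_smul, Complex.norm_real, Real.norm_of_nonneg (ha n).le]
    have h1 : ‖((X0 n).symm v : H)‖ ≤ ‖((X0 n).symm : K0 n →L[ℂ] ↥(Hn n))‖ * ‖v‖ :=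
      ((X0 n).symm : K0 n →L[ℂ] ↥(Hn n)).le_opNorm v
    calc a n * ‖((X0 n).symm v : H)‖ ≤ a n * (‖((X0 n).symm : K0 n →L[ℂ] ↥(Hn n))‖ * ‖v‖) :=
          mul_le_mul_of_nonneg_left h1 (ha n).le
      _ = (a n * ‖((X0 n).symm : K0 n →L[ℂ] ↥(Hn n))‖) * ‖v‖ := by ring
      _ ≤ _ := by
        gcongr
        exact (hC1 n).trans ((le_max_left _ _).trans (le_max_right _ _))
  · intro n v
    rw [← hEJ n _ (hTH n _ (hEm n v)), hJT, hJE]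
  · intro n x hx
    have := hJQ n x
    rwa [hQid n x hx] at this

theorem ua_backward {H : Type} [NormedAddCommGroup H] [InnerProductSpace ℂ H] [CompleteSpace H]
    (K0 : ℕ → Type) [∀ n, NormedAddCommGroup (K0 n)] [∀ n, InnerProductSpace ℂ (K0 n)]
    [∀ n, CompleteSpace (K0 n)]
    (U0 : ∀ n, K0 n →L[ℂ] K0 n)
    (hU0 : ∀ n, IsUnitaryOp (U0 n))
    (hsing : ∀ n k, n ≠ k → ∀ Z : K0 n →L[ℂ] K0 k, Z.comp (U0 n) = (U0 k).comp Z → Z = 0)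
    (T : H →L[ℂ] H) (Hn : ℕ → Submodule ℂ H)
    (hd : (⨆ n, Hn n).topologicalClosure = ⊤)
    (C : ℝ) (J : ∀ n, H →L[ℂ] K0 n) (E : ∀ n, K0 n →L[ℂ] H) (hC : 0 < C)
    (hEb : ∀ n v, ‖E n v‖ ≤ C * ‖v‖) (hEm : ∀ n v, E n v ∈ Hn n)
    (hEJ : ∀ n, ∀ x ∈ Hn n, E n (J n x) = x) (hJE : ∀ n v, J n (E n v) = v)
    (hJ0 : ∀ n k, k ≠ n → ∀ x ∈ Hn k, J n x = 0) (hJT : ∀ n x, J n (T x) = U0 n (J n x))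
    (hTE : ∀ n v, T (E n v) = E n (U0 n v)) (hJ1 : ∀ n, ∀ x ∈ Hn n, ‖J n x‖ ≤ ‖x‖)
    (c : ℝ) (hc : 0 < c) (hlow : ∀ (s : Finset ℕ) (x : ℕ → H), (∀ n ∈ s, x n ∈ Hn n) →
      c ^ 2 * ∑ n ∈ s, ‖x n‖ ^ 2 ≤ ‖∑ n ∈ s, x n‖ ^ 2) :
    ∃ (X : H →L[ℂ] lp K0 2) (U : lp K0 2 →L[ℂ] lp K0 2), IsUnitaryAsymptote T (lp K0 2) X U := by
  classical
  have hbound : ∀ x (s : Finset ℕ), ∑ i ∈ s, ‖J i x‖ ^ 2 ≤ (c⁻¹ * ‖x‖) ^ 2 := by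
    intro x s
    have hx : x ∈ closure ((⨆ n, Hn n : Submodule ℂ H) : Set H) := by
      rw [← Submodule.topologicalClosure_coe, hd]; trivial
    have hcl : IsClosed {x : H | ∑ i ∈ s, ‖J i x‖ ^ 2 ≤ (c⁻¹ * ‖x‖) ^ 2} :=
      isClosed_le (by fun_prop) (by fun_prop)
    refine closure_minimal ?_ hcl hx
    intro x hx
    obtain ⟨y, hy, rfl⟩ := (Submodule.mem_iSup_iff_exists_finsupp Hn x).1 hx
    have h1 : ∀ i, J i (y.sum fun _ v => v) = J i (y i) := by
      intro i
      rw [Finsupp.sum, map_sum, Finset.sum_eq_single i]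
      · intro k _ hk
        exact hJ0 i k hk _ (hy k)
      · intro h
        rw [Finsupp.notMem_support_iff.1 h, map_zero]
    have h2 := hlow (s ∪ y.support) y fun n _ => hy n
    have h3 : ∑ n ∈ s ∪ y.support, y n = y.sum fun _ v => v := by
      rw [Finsupp.sum]
      refine (Finset.sum_subset Finset.subset_union_right fun i _ h => ?_).symm
      exact Finsupp.notMem_support_iff.1 h
    rw [h3] at h2
    simp only [Set.mem_ofPred_eq, h1]
    calc ∑ i ∈ s, ‖J i (y i)‖ ^ 2 ≤ ∑ i ∈ s, ‖y i‖ ^ 2 := by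
          refine Finset.sum_le_sum fun i _ => ?_
          gcongr
          exact hJ1 i _ (hy i)
      _ ≤ ∑ i ∈ s ∪ y.support, ‖y i‖ ^ 2 :=
          Finset.sum_le_sum_of_subset_of_nonneg Finset.subset_union_left fun _ _ _ => by positivity
      _ ≤ _ := by
        rw [mul_pow, inv_pow, inv_mul_eq_div, le_div_iff₀ (by positivity), mul_comm]
        exact h2
  obtain ⟨X, hX⟩ := ua_assemble K0 J c⁻¹ (by positivity) hbound
  obtain ⟨U, hU, hUa⟩ := ua_dsum K0 U0 hU0
  have hXs : ∀ k, ∀ x ∈ Hn k, X x = lp.single 2 k (J k x) := by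
    intro k x hx
    ext i
    rw [hX]
    by_cases h : i = k
    · subst h; simp
    · rw [lp.single_apply_ne _ _ _ h, hJ0 i k (Ne.symm h) x hx]
  have hdr : DenseRange X := by
    intro f
    have hs := lp.hasSum_single (E := K0) (p := 2) (by simp) f
    refine mem_closure_of_tendsto hs (Filter.Eventually.of_forall fun s => ?_)
    refine ⟨∑ i ∈ s, E i ((f : ∀ i, K0 i) i), ?_⟩
    rw [map_sum]
    refine Finset.sum_congr rfl fun i _ => ?_
    rw [hXs i _ (hEm i _), hJE]
  have hXT : X.comp T = U.comp X := by
    ext x i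
    simp only [ContinuousLinearMap.comp_apply]
    rw [hX, hUa, hX, hJT]
  refine ⟨X, U, hU, hXT, ?_, ?_⟩
  · rw [eq_top_iff]
    intro f _
    have : f ∈ closure (Set.range X) := hdr f
    refine closure_mono ?_ this
    refine Set.Subset.trans ?_ Submodule.subset_span
    exact Set.subset_iUnion_of_subset 0 (by simp)
  · intro K' _ _ _ W Y hW hY
    have hYa : ∀ x, Y (T x) = W (Y x) := fun x => DFunLike.congr_fun hY x
    obtain ⟨Z, hZ⟩ := ua_synth K0 (fun n => Y.comp (E n)) (‖Y‖ * C) (by positivity)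
      (by
        intro n v
        rw [ContinuousLinearMap.comp_apply, mul_assoc]
        exact (Y.le_opNorm _).trans (by gcongr; exact hEb n v))
      (by
        intro i j hij a b
        exact ua_orth (hU0 i) hW (hsing j i hij.symm) (Y.comp (E j)) (Y.comp (E i))
          (fun x => by simp [← hTE, hYa]) (fun x => by simp [← hTE, hYa]) b a)
    have hYZ : Y = Z.comp X := by
      refine ua_ext Hn hd _ _ fun n x hx => ?_
      rw [ContinuousLinearMap.comp_apply, hXs n x hx, hZ, ContinuousLinearMap.comp_apply,
        hEJ n x hx]
    refine ⟨Z, ⟨?_, hYZ⟩, ?_⟩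
    · apply ContinuousLinearMap.coeFn_injective
      refine hdr.equalizer (by fun_prop) (by fun_prop) ?_
      ext x
      have e1 : U (X x) = X (T x) := (DFunLike.congr_fun hXT x).symm
      have e2 : ∀ x, Z (X x) = Y x := fun x => (DFunLike.congr_fun hYZ x).symm
      simp only [Function.comp_apply, ContinuousLinearMap.comp_apply]
      rw [e1, e2, e2, hYa]
    · rintro Z' ⟨_, hZ'⟩
      apply ContinuousLinearMap.coeFn_injective
      refine hdr.equalizer (by fun_prop) (by fun_prop) ?_
      ext x
      exact DFunLike.congr_fun (hZ'.symm.trans hYZ) x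

theorem ua_forward {H : Type} [NormedAddCommGroup H] [InnerProductSpace ℂ H] [CompleteSpace H]
    (K0 : ℕ → Type) [∀ n, NormedAddCommGroup (K0 n)] [∀ n, InnerProductSpace ℂ (K0 n)]
    [∀ n, CompleteSpace (K0 n)]
    (U0 : ∀ n, K0 n →L[ℂ] K0 n)
    (hU0 : ∀ n, IsUnitaryOp (U0 n))
    (hsing : ∀ n k, n ≠ k → ∀ Z : K0 n →L[ℂ] K0 k, Z.comp (U0 n) = (U0 k).comp Z → Z = 0)
    (T : H →L[ℂ] H) (Hn : ℕ → Submodule ℂ H)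
    (C : ℝ) (J : ∀ n, H →L[ℂ] K0 n) (E : ∀ n, K0 n →L[ℂ] H) (hC : 0 < C)
    (hJb : ∀ n x, ‖J n x‖ ≤ C * ‖x‖) (hEb : ∀ n v, ‖E n v‖ ≤ C * ‖v‖)
    (hEJ : ∀ n, ∀ x ∈ Hn n, E n (J n x) = x)
    (hJT : ∀ n x, J n (T x) = U0 n (J n x))
    (hTE : ∀ n v, T (E n v) = E n (U0 n v))
    (K : Type) [NormedAddCommGroup K] [InnerProductSpace ℂ K] [CompleteSpace K]
    (X : H →L[ℂ] K) (U : K →L[ℂ] K) (hua : IsUnitaryAsymptote T K X U) :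
    ∃ c : ℝ, 0 < c ∧ ∀ (s : Finset ℕ) (x : ℕ → H), (∀ n ∈ s, x n ∈ Hn n) →
      c ^ 2 * ∑ n ∈ s, ‖x n‖ ^ 2 ≤ ‖∑ n ∈ s, x n‖ ^ 2 := by
  obtain ⟨hU, hXT, -, huniv⟩ := hua
  have hXTa : ∀ x, X (T x) = U (X x) := fun x => DFunLike.congr_fun hXT x
  have key : ∃ d : ℝ, 0 < d ∧ ∀ n, ∀ x ∈ Hn n, d * ‖x‖ ≤ ‖X x‖ := by
    by_contra! hcon
    choose n x hx hlt using fun j : ℕ => hcon ((1 / 4 : ℝ) ^ j) (by positivity)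
    obtain ⟨Y, hY⟩ := ua_assemble (fun j => K0 (n j)) (fun j => ((1 / 2 : ℂ) ^ j) • J (n j))
      (2 * C) (by positivity) (by
        intro x s
        have hgeo : ∑ i ∈ s, (1 / 4 : ℝ) ^ i ≤ 4 := by
          refine (Summable.sum_le_tsum s (fun i _ => by positivity)
            (summable_geometric_of_lt_one (by norm_num) (by norm_num))).trans ?_
          rw [tsum_geometric_of_lt_one (by norm_num) (by norm_num)]
          norm_num
        calc ∑ i ∈ s, ‖(((1 / 2 : ℂ) ^ i) • J (n i)) x‖ ^ 2
            ≤ ∑ i ∈ s, (1 / 4 : ℝ) ^ i * (C * ‖x‖) ^ 2 := by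
              refine Finset.sum_le_sum fun i _ => ?_
              have e : ‖(1 / 2 : ℂ) ^ i‖ ^ 2 = (1 / 4 : ℝ) ^ i := by
                rw [norm_pow, ← pow_mul, mul_comm, pow_mul]; norm_num
              rw [_root_.smul_apply, norm_smul, mul_pow, e]
              gcongr
              exact hJb _ _
          _ ≤ 4 * (C * ‖x‖) ^ 2 := by rw [← Finset.sum_mul]; gcongr
          _ = _ := by ring)
    obtain ⟨W, hW, hWa⟩ := ua_dsum (fun j => K0 (n j)) (fun j => U0 (n j)) (fun j => hU0 (n j))
    obtain ⟨Z, ⟨-, hZ⟩, -⟩ := huniv _ W Y hW (by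
      ext x j
      simp only [ContinuousLinearMap.comp_apply]
      rw [hY, hWa, hY]
      simp [hJT])
    have hb : ∀ j : ℕ, (2 : ℝ) ^ j ≤ C * ‖Z‖ := by
      intro j
      have hxp : 0 < ‖x j‖ := by
        rcases (norm_nonneg (x j)).eq_or_lt with h | h
        · have := hlt j
          rw [← h, mul_zero] at this
          exact absurd this (not_lt.2 (norm_nonneg _))
        · exact h
      have h1 : ‖x j‖ ≤ C * ‖J (n j) (x j)‖ := by
        have := hEb (n j) (J (n j) (x j))
        rwa [hEJ _ _ (hx j)] at this
      have h2 : (1 / 2 : ℝ) ^ j * ‖J (n j) (x j)‖ ≤ ‖Y (x j)‖ := by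
        have := lp.norm_apply_le_norm (p := 2) (by simp) (Y (x j)) j
        rw [hY, _root_.smul_apply, norm_smul, norm_pow] at this
        simpa using this
      have h3 : ‖Y (x j)‖ ≤ ‖Z‖ * ((1 / 4 : ℝ) ^ j * ‖x j‖) := by
        rw [hZ, ContinuousLinearMap.comp_apply]
        exact (Z.le_opNorm _).trans (by gcongr; exact (hlt j).le)
      have h4 : (1 / 2 : ℝ) ^ j * ‖x j‖ ≤ (C * ‖Z‖) * (1 / 4 : ℝ) ^ j * ‖x j‖ := by
        calc (1 / 2 : ℝ) ^ j * ‖x j‖ ≤ (1 / 2 : ℝ) ^ j * (C * ‖J (n j) (x j)‖) := by gcongr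
          _ = C * ((1 / 2 : ℝ) ^ j * ‖J (n j) (x j)‖) := by ring
          _ ≤ C * (‖Z‖ * ((1 / 4 : ℝ) ^ j * ‖x j‖)) := mul_le_mul_of_nonneg_left (h2.trans h3) hC.le
          _ = _ := by ring
      have h5 := le_of_mul_le_mul_right h4 hxp
      have h6 : (1 / 2 : ℝ) ^ j = 2 ^ j * (1 / 4 : ℝ) ^ j := by rw [← mul_pow]; norm_num
      rw [h6] at h5
      exact le_of_mul_le_mul_right h5 (by positivity)
    obtain ⟨j, hj⟩ := pow_unbounded_of_one_lt (C * ‖Z‖) (one_lt_two)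
    exact absurd (hb j) (not_le.2 hj)
  obtain ⟨d, hd, hdX⟩ := key
  refine ⟨d / (‖X‖ + 1), by positivity, fun s x hx => ?_⟩
  have hp : ‖∑ n ∈ s, X (E n (J n (x n)))‖ ^ 2 = ∑ n ∈ s, ‖X (E n (J n (x n)))‖ ^ 2 :=
    ua_pyth (fun n => X (E n (J n (x n)))) (fun i j hij =>
      ua_orth (hU0 i) hU (hsing j i hij.symm) (X.comp (E j)) (X.comp (E i))
          (fun x => by simp [← hTE, hXTa]) (fun x => by simp [← hTE, hXTa]) _ _) s
  have e : ∀ n ∈ s, X (E n (J n (x n))) = X (x n) := fun n hn => by rw [hEJ n _ (hx n hn)]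
  have e2 : ∑ n ∈ s, ‖X (E n (J n (x n)))‖ ^ 2 = ∑ n ∈ s, ‖X (x n)‖ ^ 2 :=
    Finset.sum_congr rfl fun n hn => by rw [e n hn]
  rw [Finset.sum_congr rfl e, e2, ← map_sum] at hp
  have h1 : d ^ 2 * ∑ n ∈ s, ‖x n‖ ^ 2 ≤ ‖X (∑ n ∈ s, x n)‖ ^ 2 := by
    rw [hp, Finset.mul_sum]
    refine Finset.sum_le_sum fun n hn => ?_
    rw [← mul_pow]
    gcongr
    exact hdX n _ (hx n hn)
  have h2 : ‖X (∑ n ∈ s, x n)‖ ≤ (‖X‖ + 1) * ‖∑ n ∈ s, x n‖ :=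
    (X.le_opNorm _).trans (by gcongr; linarith)
  rw [div_pow, div_mul_eq_mul_div, div_le_iff₀ (by positivity)]
  calc _ ≤ _ := h1
    _ ≤ ((‖X‖ + 1) * ‖∑ n ∈ s, x n‖) ^ 2 := by gcongr
    _ = _ := by ring

/-- Theorem 2.6: under (xxnxxn1) and (qqn), `T` has a unitary asymptote if and only if the
family `{H_n}` satisfies a lower Riesz-type estimate. -/
theorem has_unitary_asymptote_iff_lower_estimate
    {H : Type} [NormedAddCommGroup H] [InnerProductSpace ℂ H] [CompleteSpace H]
    [TopologicalSpace.SeparableSpace H]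
    (K0 : ℕ → Type) [∀ n, NormedAddCommGroup (K0 n)] [∀ n, InnerProductSpace ℂ (K0 n)]
    [∀ n, CompleteSpace (K0 n)] [∀ n, TopologicalSpace.SeparableSpace (K0 n)]
    -- the unitaries `U_{0n}`, each reductive, with pairwise singular spectral measures:
    (U0 : ∀ n, K0 n →L[ℂ] K0 n)
    (hU0 : ∀ n, IsUnitaryOp (U0 n))
    (hU0red : ∀ (n) (F : Submodule ℂ (K0 n)), IsClosed (F : Set (K0 n)) →
      (∀ x ∈ F, U0 n x ∈ F) → ∀ x ∈ F, ContinuousLinearMap.adjoint (U0 n) x ∈ F)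
    (hsing : ∀ n k, n ≠ k → ∀ Z : K0 n →L[ℂ] K0 k, Z.comp (U0 n) = (U0 k).comp Z → Z = 0)
    (T : H →L[ℂ] H)
    -- the nonzero closed `T`-invariant subspaces `H_n`:
    (Hn : ℕ → Submodule ℂ H)
    (hHcl : ∀ n, IsClosed ((Hn n : Set H)))
    (hHne : ∀ n, Hn n ≠ ⊥)
    (hTH : ∀ n, ∀ x ∈ Hn n, T x ∈ Hn n)
    -- `Vn n = ⋁_{k ≠ n} H_k`:
    (Vn : ℕ → Submodule ℂ H)
    (hVn : ∀ n, Vn n = (⨆ k ∈ {k : ℕ | k ≠ n}, Hn k).topologicalClosure)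
    -- (main0):
    (hmain0 : ∀ n, Hn n ⊓ Vn n = ⊥ ∧ Hn n ⊔ Vn n = ⊤)
    -- (main1): the invertible intertwiners `X_n : H_n → K_{0n}`:
    (X0 : ∀ n, ↥(Hn n) ≃L[ℂ] K0 n)
    (hX0 : ∀ (n) (x : ↥(Hn n)), X0 n ⟨T ↑x, hTH n ↑x x.2⟩ = U0 n (X0 n x))
    -- the skew projections `Q_n` onto `H_n` along `⋁_{k ≠ n} H_k`:
    (Q : ℕ → H →L[ℂ] H)
    (hQmem : ∀ n x, Q n x ∈ Hn n)
    (hQid : ∀ n, ∀ x ∈ Hn n, Q n x = x)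
    (hQker : ∀ n, ∀ x ∈ Vn n, Q n x = 0)
    -- (xxnxxn1):
    (hXX : ∃ C : ℝ, ∀ n,
      ‖(X0 n : ↥(Hn n) →L[ℂ] K0 n)‖ * ‖((X0 n).symm : K0 n →L[ℂ] ↥(Hn n))‖ ≤ C)
    -- (qqn):
    (hQbd : ∃ C : ℝ, ∀ n, ‖Q n‖ ≤ C) :
    (∃ (K : Type) (_ : NormedAddCommGroup K) (_ : InnerProductSpace ℂ K) (_ : CompleteSpace K)
      (X : H →L[ℂ] K) (U : K →L[ℂ] K), IsUnitaryAsymptote T K X U) ↔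
    (∃ c : ℝ, 0 < c ∧ ∀ (s : Finset ℕ) (x : ℕ → H), (∀ n ∈ s, x n ∈ Hn n) →
      c ^ 2 * ∑ n ∈ s, ‖x n‖ ^ 2 ≤ ‖∑ n ∈ s, x n‖ ^ 2) := by
  obtain ⟨hd, C, J, E, hC, hJb, hEb, hEm, hEJ, hJE, hJ0, hJT, hTE, hJ1⟩ :=
    ua_data K0 U0 T Hn hHne hTH Vn hVn hmain0 X0 hX0 Q hQmem hQid hQker hXX hQbd
  constructor
  · rintro ⟨K, _, _, _, X, U, hua⟩
    exact ua_forward K0 U0 hU0 hsing T Hn C J E hC hJb hEb hEJ hJT hTE K X U hua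
  · rintro ⟨c, hc, hlow⟩
    obtain ⟨X, U, h⟩ := ua_backward K0 U0 hU0 hsing T Hn hd C J E hC hEb hEm hEJ hJE hJ0 hJT hTE
      hJ1 c hc hlow
    exact ⟨lp K0 2, _, _, inferInstance, X, U, h⟩
end
end
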